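/- arXiv:1202.6083 — 6 statements merged into one kernel-verified Lean document; each statement's English description precedes it below -/
import Mathlib

section
/- For all σ, μ ∈ M with values c_i and d_i on τ_i respectively, the following summation-by-parts identity holds: (Aσ, μ)_Γ = (σ, μ)_Γ + Σ_{i=1}^N (c_{i+1} − c_i)(\overline{d_{i+1}} − \overline{d_i})/l_i, where indices are taken modulo N. -/
/-- The operator `A : M → M` on piecewise constants (identified with their value vectors
`c : Fin N → ℂ`, indices mod `N`): `(Aσ)|_{τ_i} = c_i − ((c_{i+1} − c_i)/l_i² − (c_i − c_{i−1})/(l_i l_{i−1}))`. -/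
noncomputable def Aop {N : ℕ} [NeZero N] (l : Fin N → ℝ) (c : Fin N → ℂ) : Fin N → ℂ :=
  fun i => c i - ((c (i + 1) - c i) / (l i : ℂ) ^ 2
    - (c i - c (i - 1)) / ((l i : ℂ) * (l (i - 1) : ℂ)))

/-- The `L²(0,L)` inner product of two piecewise constants with value vectors `c, d`:
`(σ, μ)_Γ = ∫₀^L σ \overline{μ} ds = ∑ i, c_i \overline{d_i} l_i`. -/
noncomputable def ipGamma {N : ℕ} (l : Fin N → ℝ) (c d : Fin N → ℂ) : ℂ :=
  ∑ i, c i * (starRingEnd ℂ) (d i) * (l i : ℂ)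

/-- For all `σ, μ ∈ M` with values `c_i` and `d_i` on `τ_i`, the
summation-by-parts identity holds:
`(Aσ, μ)_Γ = (σ, μ)_Γ + ∑_{i=1}^N (c_{i+1} − c_i)(\overline{d_{i+1}} − \overline{d_i})/l_i`,
indices taken mod `N`. -/
theorem stmt_2 (L : ℝ) (hL : 0 < L) (N : ℕ) [NeZero N] (hN : 2 ≤ N)
    (l : Fin N → ℝ) (hl : ∀ i, 0 < l i) (hsum : ∑ i, l i = L)
    (c d : Fin N → ℂ) :
    ipGamma l (Aop l c) d
      = ipGamma l c d
        + ∑ i, (c (i + 1) - c i) * ((starRingEnd ℂ) (d (i + 1)) - (starRingEnd ℂ) (d i))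
            / (l i : ℂ) := by
  have hne : ∀ i, (l i : ℂ) ≠ 0 := fun i => by exact_mod_cast (hl i).ne'
  have hshift : ∑ i, (c i - c (i - 1)) * (starRingEnd ℂ) (d i) / (l (i - 1) : ℂ)
      = ∑ i, (c (i + 1) - c i) * (starRingEnd ℂ) (d (i + 1)) / (l i : ℂ) := by
    rw [← Equiv.sum_comp (Equiv.addRight (1 : Fin N))]
    refine Finset.sum_congr rfl fun i _ => ?_
    simp only [Equiv.coe_addRight, add_sub_cancel_right]
  have h1 : ∀ i, Aop l c i * (starRingEnd ℂ) (d i) * (l i : ℂ)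
      = c i * (starRingEnd ℂ) (d i) * (l i : ℂ)
        - (c (i + 1) - c i) * (starRingEnd ℂ) (d i) / (l i : ℂ)
        + (c i - c (i - 1)) * (starRingEnd ℂ) (d i) / (l (i - 1) : ℂ) := by
    intro i
    have a := hne i
    have b := hne (i - 1)
    unfold Aop
    field_simp
    ring
  unfold ipGamma
  rw [Finset.sum_congr rfl fun i _ => h1 i, Finset.sum_add_distrib, Finset.sum_sub_distrib, hshift,
    sub_add, sub_eq_add_neg, neg_sub, ← Finset.sum_sub_distrib]
  congr 1
  refine Finset.sum_congr rfl fun i _ => ?_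
  ring
end

section
/- The sesquilinear form (σ, μ) ↦ (Aσ, μ)_Γ on M is Hermitian: (Aσ, μ)_Γ = \overline{(Aμ, σ)_Γ} for all σ, μ ∈ M. Equivalently, if 𝙰 denotes the N×N matrix of A in the basis of indicator functions of the elements and 𝙷 = diag(l_1, …, l_N), then the matrix 𝙷𝙰 is symmetric, even though 𝙰 itself is in general not symmetric. -/
theorem ipGamma_Aop_eq {N : ℕ} [NeZero N] (l : Fin N → ℝ) (hl : ∀ i, 0 < l i)
    (c d : Fin N → ℂ) :
    ipGamma l (Aop l c) d = ∑ i, (c i * (starRingEnd ℂ) (d i) * (l i : ℂ)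
      + (c (i + 1) - c i) * (starRingEnd ℂ) (d (i + 1) - d i) / (l i : ℂ)) := by
  have key : ∑ i, (c (i + 1) - c i) * (starRingEnd ℂ) (d (i + 1)) / (l i : ℂ)
      = ∑ i, (c i - c (i - 1)) * (starRingEnd ℂ) (d i) / (l (i - 1) : ℂ) := by
    rw [← Equiv.sum_comp (Equiv.addRight (1 : Fin N))
      (fun i => (c i - c (i - 1)) * (starRingEnd ℂ) (d i) / (l (i - 1) : ℂ))]
    simp
  rw [← sub_eq_zero] at key ⊢
  rw [← Finset.sum_sub_distrib] at key
  unfold ipGamma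
  rw [← Finset.sum_sub_distrib, ← neg_eq_zero, ← Finset.sum_neg_distrib, ← key]
  refine Finset.sum_congr rfl fun i _ => ?_
  have h1 : (l i : ℂ) ≠ 0 := by exact_mod_cast (hl i).ne'
  have h2 : (l (i - 1) : ℂ) ≠ 0 := by exact_mod_cast (hl (i - 1)).ne'
  simp only [Aop, map_sub]
  field_simp
  ring

/-- The sesquilinear form `(σ, μ) ↦ (Aσ, μ)_Γ` on `M` is Hermitian:
`(Aσ, μ)_Γ = \overline{(Aμ, σ)_Γ}` for all `σ, μ ∈ M` (equivalently, the matrix `𝙷𝙰` is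
symmetric, where `𝙰` is the matrix of `A` in the indicator basis and `𝙷 = diag(l₁,…,l_N)`). -/
theorem stmt_3 (L : ℝ) (hL : 0 < L) (N : ℕ) [NeZero N] (hN : 2 ≤ N)
    (l : Fin N → ℝ) (hl : ∀ i, 0 < l i) (hsum : ∑ i, l i = L)
    (c d : Fin N → ℂ) :
    ipGamma l (Aop l c) d = (starRingEnd ℂ) (ipGamma l (Aop l d) c) := by
  rw [ipGamma_Aop_eq l hl, ipGamma_Aop_eq l hl, map_sum]
  refine Finset.sum_congr rfl fun i _ => ?_
  simp only [map_add, map_mul, map_div₀, map_sub, Complex.conj_conj, Complex.conj_ofReal]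
  ring
end

section
/- For every σ ∈ M with values c_i one has (Aσ, σ)_Γ = Σ_{i=1}^N |c_i|² l_i + Σ_{i=1}^N |c_{i+1} − c_i|²/l_i ≥ ‖σ‖²_{L²(0,L)}. Consequently the linear operator A : M → M is invertible. -/
/-- For every `σ ∈ M` with values `c_i` one has
`(Aσ, σ)_Γ = ∑ |c_i|² l_i + ∑ |c_{i+1} − c_i|²/l_i ≥ ‖σ‖²_{L²(0,L)}`
(note `‖σ‖²_{L²(0,L)} = ∑ |c_i|² l_i`).  Consequently `A : M → M` is invertible. -/
theorem stmt_4 (L : ℝ) (hL : 0 < L) (N : ℕ) [NeZero N] (hN : 2 ≤ N)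
    (l : Fin N → ℝ) (hl : ∀ i, 0 < l i) (hsum : ∑ i, l i = L) :
    (∀ c : Fin N → ℂ,
      ipGamma l (Aop l c) c
          = ((∑ i, ‖c i‖ ^ 2 * l i + ∑ i, ‖c (i + 1) - c i‖ ^ 2 / l i : ℝ) : ℂ) ∧
        (∑ i, ‖c i‖ ^ 2 * l i)
          ≤ ∑ i, ‖c i‖ ^ 2 * l i + ∑ i, ‖c (i + 1) - c i‖ ^ 2 / l i) ∧
      Function.Bijective (Aop l) := by
  have key : ∀ c : Fin N → ℂ, ipGamma l (Aop l c) c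
      = ((∑ i, ‖c i‖ ^ 2 * l i + ∑ i, ‖c (i + 1) - c i‖ ^ 2 / l i : ℝ) : ℂ) := by
    intro c
    have hshift : ∑ i, (c i - c (i - 1)) / (l (i - 1) : ℂ) * (starRingEnd ℂ) (c i)
        = ∑ i, (c (i + 1) - c i) / (l i : ℂ) * (starRingEnd ℂ) (c (i + 1)) := by
      rw [← Equiv.sum_comp (Equiv.addRight (1 : Fin N))]
      simp
    have h1 : ipGamma l (Aop l c) c = ∑ i, c i * (starRingEnd ℂ) (c i) * (l i : ℂ)
        - ∑ i, (c (i + 1) - c i) / (l i : ℂ) * (starRingEnd ℂ) (c i)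
        + ∑ i, (c i - c (i - 1)) / (l (i - 1) : ℂ) * (starRingEnd ℂ) (c i) := by
      rw [← Finset.sum_sub_distrib, ← Finset.sum_add_distrib]
      unfold ipGamma Aop
      refine Finset.sum_congr rfl fun i _ => ?_
      have a : (l i : ℂ) ≠ 0 := by exact_mod_cast (hl i).ne'
      have b : (l (i - 1) : ℂ) ≠ 0 := by exact_mod_cast (hl (i - 1)).ne'
      field_simp
      ring
    rw [h1, hshift]
    push_cast
    rw [sub_add, sub_eq_add_neg, ← Finset.sum_sub_distrib, ← Finset.sum_neg_distrib]
    congr 1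
    · refine Finset.sum_congr rfl fun i _ => ?_
      rw [Complex.mul_conj']
    · refine Finset.sum_congr rfl fun i _ => ?_
      rw [← Complex.mul_conj', map_sub]
      ring
  have hnn : ∀ c : Fin N → ℂ, 0 ≤ ∑ i, ‖c (i + 1) - c i‖ ^ 2 / l i := fun c =>
    Finset.sum_nonneg fun i _ => div_nonneg (by positivity) (hl i).le
  refine ⟨fun c => ⟨key c, le_add_of_nonneg_right (hnn c)⟩, ?_⟩
  let T : (Fin N → ℂ) →ₗ[ℂ] (Fin N → ℂ) :=
    { toFun := Aop l
      map_add' := by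
        intro c d
        funext i
        simp only [Aop, Pi.add_apply]
        ring
      map_smul' := by
        intro r c
        funext i
        simp only [Aop, Pi.smul_apply, smul_eq_mul, RingHom.id_apply]
        ring }
  have hinj : Function.Injective T := by
    rw [injective_iff_map_eq_zero]
    intro c hc
    have hc' : Aop l c = 0 := hc
    have h := key c
    rw [hc'] at h
    have h0 : ipGamma l 0 c = 0 := by simp [ipGamma]
    rw [h0] at h
    have h2 : ∑ i, ‖c i‖ ^ 2 * l i + ∑ i, ‖c (i + 1) - c i‖ ^ 2 / l i = 0 := by
      exact_mod_cast h.symm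
    have hn : ∀ i ∈ Finset.univ, 0 ≤ ‖c i‖ ^ 2 * l i := fun i _ =>
      mul_nonneg (by positivity) (hl i).le
    have h3 : ∑ i, ‖c i‖ ^ 2 * l i = 0 :=
      le_antisymm (by linarith [hnn c]) (Finset.sum_nonneg hn)
    funext i
    have h4 := (Finset.sum_eq_zero_iff_of_nonneg hn).1 h3 i (Finset.mem_univ i)
    simpa [(hl i).ne'] using h4
  exact ⟨hinj, LinearMap.injective_iff_surjective.1 hinj⟩
end

section
/- There is a constant C > 0 depending only on C₁, C₂ and L (and not on N or h) such that for every σ ∈ M, (Aσ, σ)_Γ ≤ C h^{−2} ‖σ‖²_{L²(0,L)}; i.e., the largest eigenvalue of A with respect to the L² inner product is at most C h^{−2}. -/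
open scoped ComplexOrder

theorem aux_ip {N : ℕ} [NeZero N] (l : Fin N → ℝ) (hl : ∀ i, 0 < l i) (c : Fin N → ℂ) :
    ipGamma l (Aop l c) c =
      ((∑ i, ‖c i‖ ^ 2 * l i + ∑ i, ‖c (i + 1) - c i‖ ^ 2 / l i : ℝ) : ℂ) := by
  have hl' : ∀ i, (l i : ℂ) ≠ 0 := fun i => by exact_mod_cast (hl i).ne'
  have h1 : ipGamma l (Aop l c) c = ∑ i, c i * (starRingEnd ℂ) (c i) * (l i : ℂ)
      - ∑ i, (c (i + 1) - c i) * (starRingEnd ℂ) (c i) / (l i : ℂ)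
      + ∑ i, (c i - c (i - 1)) * (starRingEnd ℂ) (c i) / (l (i - 1) : ℂ) := by
    unfold ipGamma Aop
    rw [← Finset.sum_sub_distrib, ← Finset.sum_add_distrib]
    refine Finset.sum_congr rfl fun i _ => ?_
    have := hl' i
    have := hl' (i - 1)
    field_simp
    ring
  have h2 : ∑ i, (c i - c (i - 1)) * (starRingEnd ℂ) (c i) / (l (i - 1) : ℂ)
      = ∑ i, (c (i + 1) - c i) * (starRingEnd ℂ) (c (i + 1)) / (l i : ℂ) := by
    rw [← Equiv.sum_comp (Equiv.addRight (1 : Fin N))]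
    simp
  rw [h1, h2]
  push_cast
  rw [sub_add, ← Finset.sum_sub_distrib, sub_eq_add_neg, ← Finset.sum_neg_distrib]
  congr 1
  · refine Finset.sum_congr rfl fun i _ => ?_
    rw [Complex.mul_conj']
  · refine Finset.sum_congr rfl fun i _ => ?_
    rw [← Complex.mul_conj', map_sub]
    ring

/-- There is a constant `C > 0` depending only on the quasi-uniformity
constants `C₁, C₂` and `L` (not on `N` or `h`) such that for every quasi-uniform partition
(`C₁ h ≤ l_i ≤ C₂ h`, `h = max_i l_i`, `∑ l_i = L`) and every `σ ∈ M`,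
`(Aσ, σ)_Γ ≤ C h⁻² ‖σ‖²_{L²(0,L)}` (with `‖σ‖²_{L²(0,L)} = ∑ |c_i|² l_i`). -/
theorem stmt_5 (C₁ C₂ L : ℝ) (hC₁ : 0 < C₁) (hC₂ : 0 < C₂) (hL : 0 < L) :
    ∃ C > 0, ∀ (N : ℕ) [NeZero N], 2 ≤ N →
      ∀ (l : Fin N → ℝ), (∀ i, 0 < l i) → (∑ i, l i = L) →
      ∀ h : ℝ, IsGreatest (Set.range l) h →
      (∀ i, C₁ * h ≤ l i ∧ l i ≤ C₂ * h) →
      ∀ c : Fin N → ℂ,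
        ipGamma l (Aop l c) c ≤ ((C / h ^ 2 * ∑ i, ‖c i‖ ^ 2 * l i : ℝ) : ℂ) := by
  refine ⟨L ^ 2 + 4 / C₁ ^ 2, by positivity, ?_⟩
  intro N _ _ l hl hsum h hh hq c
  rw [aux_ip l hl c]
  refine Complex.real_le_real.mpr ?_
  obtain ⟨⟨j, rfl⟩, -⟩ := hh
  have hj := hl j
  have hjL : l j ≤ L := hsum ▸ Finset.single_le_sum (fun i _ => (hl i).le) (Finset.mem_univ j)
  set h := l j with hdef
  set S := ∑ i, ‖c i‖ ^ 2 * l i with hS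
  have hS0 : 0 ≤ S := Finset.sum_nonneg fun i _ => mul_nonneg (sq_nonneg _) (hl i).le
  have hb : (0 : ℝ) < C₁ * h := mul_pos hC₁ hj
  have hT : ∑ i, ‖c i‖ ^ 2 ≤ S / (C₁ * h) := by
    rw [le_div_iff₀ hb, Finset.sum_mul]
    exact Finset.sum_le_sum fun i _ => mul_le_mul_of_nonneg_left (hq i).1 (sq_nonneg _)
  have hshift : ∑ i, ‖c (i + 1)‖ ^ 2 = ∑ i, ‖c i‖ ^ 2 :=
    Equiv.sum_comp (Equiv.addRight (1 : Fin N)) (fun i => ‖c i‖ ^ 2)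
  have hD : ∑ i, ‖c (i + 1) - c i‖ ^ 2 / l i ≤ 4 * (∑ i, ‖c i‖ ^ 2) / (C₁ * h) := by
    calc ∑ i, ‖c (i + 1) - c i‖ ^ 2 / l i
        ≤ ∑ i, (2 * ‖c (i + 1)‖ ^ 2 + 2 * ‖c i‖ ^ 2) / (C₁ * h) := by
          refine Finset.sum_le_sum fun i _ => ?_
          refine div_le_div₀ (by positivity) ?_ hb (hq i).1
          have := norm_sub_le (c (i + 1)) (c i)
          have h0 := norm_nonneg (c (i + 1) - c i)
          nlinarith [sq_nonneg (‖c (i + 1)‖ - ‖c i‖)]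
      _ = _ := by
          rw [← Finset.sum_div, Finset.sum_add_distrib, ← Finset.mul_sum, ← Finset.mul_sum, hshift]
          ring
  have h3 : 4 * (∑ i, ‖c i‖ ^ 2) / (C₁ * h) ≤ 4 * (S / (C₁ * h)) / (C₁ * h) := by gcongr
  have h4 : S ≤ L ^ 2 / h ^ 2 * S := by
    refine le_mul_of_one_le_left hS0 ?_
    rw [one_le_div (by positivity)]
    gcongr
  have h5 : (L ^ 2 + 4 / C₁ ^ 2) / h ^ 2 * S = L ^ 2 / h ^ 2 * S + 4 * (S / (C₁ * h)) / (C₁ * h) := by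
    field_simp
  rw [h5]
  linarith
end

section
/- Let σ ∈ M have values c_i on τ_i, and let σ̃ be the L-periodic continuous function that is linear on each τ_i with σ̃(x_i) = c_i for all i. Then there exist constants c, C > 0 depending only on the quasi-uniformity constants C₁, C₂ such that c ‖σ‖²_{L²(0,L)} ≤ ‖σ̃‖²_{L²(0,L)} ≤ C ‖σ‖²_{L²(0,L)}. -/
open MeasureTheory

theorem aux_elem (a b : ℝ) (hab : a < b) (p q : ℂ) (f : ℝ → ℂ)
    (hf : ∀ s ∈ Set.Icc a b, f s = p + (((s - a) / (b - a) : ℝ) : ℂ) * (q - p)) :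
    IntervalIntegrable (fun s => ‖f s‖ ^ 2) volume a b ∧
    (∫ s in a..b, ‖f s‖ ^ 2) = (b - a) / 3 *
      (p.re ^ 2 + p.re * q.re + q.re ^ 2 + (p.im ^ 2 + p.im * q.im + q.im ^ 2)) := by
  have hne : b - a ≠ 0 := by linarith
  have key : Set.EqOn (fun s => ‖f s‖ ^ 2) (fun s => (p.re + (s - a) / (b - a) * (q.re - p.re)) ^ 2
      + (p.im + (s - a) / (b - a) * (q.im - p.im)) ^ 2) (Set.uIcc a b) := by
    intro s hs
    rw [Set.uIcc_of_le hab.le] at hs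
    simp only
    rw [hf s hs, ← Complex.normSq_eq_norm_sq, Complex.normSq_apply]
    simp only [Complex.add_re, Complex.add_im, Complex.re_ofReal_mul, Complex.im_ofReal_mul,
      Complex.sub_re, Complex.sub_im]
    ring
  have hcont : Continuous (fun s : ℝ => (p.re + (s - a) / (b - a) * (q.re - p.re)) ^ 2
      + (p.im + (s - a) / (b - a) * (q.im - p.im)) ^ 2) := by fun_prop
  constructor
  · refine (ContinuousOn.congr hcont.continuousOn key).intervalIntegrable
  · rw [intervalIntegral.integral_congr key]
    have hd : ∀ s ∈ Set.uIcc a b, HasDerivAt (fun s : ℝ => (p.re ^ 2 + p.im ^ 2) * s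
        + (p.re * (q.re - p.re) + p.im * (q.im - p.im)) / (b - a) * (s - a) ^ 2
        + ((q.re - p.re) ^ 2 + (q.im - p.im) ^ 2) / (3 * (b - a) ^ 2) * (s - a) ^ 3)
        ((p.re + (s - a) / (b - a) * (q.re - p.re)) ^ 2
      + (p.im + (s - a) / (b - a) * (q.im - p.im)) ^ 2) s := by
      intro s _
      have h0 : HasDerivAt (fun s : ℝ => s - a) 1 s := (hasDerivAt_id s).sub_const a
      have h1 := (hasDerivAt_id s).const_mul (p.re ^ 2 + p.im ^ 2)
      have h2 := (h0.pow 2).const_mul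
        ((p.re * (q.re - p.re) + p.im * (q.im - p.im)) / (b - a))
      have h3 := (h0.pow 3).const_mul
        (((q.re - p.re) ^ 2 + (q.im - p.im) ^ 2) / (3 * (b - a) ^ 2))
      refine ((h1.add h2).add h3).congr_deriv ?_
      push_cast
      field_simp
      ring
    rw [intervalIntegral.integral_eq_sub_of_hasDerivAt hd (hcont.intervalIntegrable _ _)]
    field_simp
    ring

theorem aux_bd (a b : ℝ) (hab : a < b) (p q : ℂ) (f : ℝ → ℂ)
    (hf : ∀ s ∈ Set.Icc a b, f s = p + (((s - a) / (b - a) : ℝ) : ℂ) * (q - p)) :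
    1 / 6 * (‖p‖ ^ 2 * (b - a)) ≤ (∫ s in a..b, ‖f s‖ ^ 2) ∧
    (∫ s in a..b, ‖f s‖ ^ 2) ≤ 1 / 2 * (‖p‖ ^ 2 * (b - a)) + 1 / 2 * (‖q‖ ^ 2 * (b - a)) := by
  rw [(aux_elem a b hab p q f hf).2]
  rw [← Complex.normSq_eq_norm_sq, Complex.normSq_apply, ← Complex.normSq_eq_norm_sq,
    Complex.normSq_apply]
  have h0 : 0 ≤ b - a := by linarith
  constructor
  · have := mul_nonneg h0 (show 0 ≤ (p.re + q.re) ^ 2 + q.re ^ 2 + (p.im + q.im) ^ 2 + q.im ^ 2 by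
      positivity)
    linarith
  · have := mul_nonneg h0 (show 0 ≤ (p.re - q.re) ^ 2 + (p.im - q.im) ^ 2 by positivity)
    linarith

theorem aux_sum (N : ℕ) (x : Fin (N + 1) → ℝ) (g : ℝ → ℝ)
    (hg : ∀ i : Fin N, IntervalIntegrable g volume (x i.castSucc) (x i.succ)) :
    (∫ s in (x 0)..(x (Fin.last N)), g s) = ∑ i : Fin N, ∫ s in (x i.castSucc)..(x i.succ), g s := by
  let a : ℕ → ℝ := fun k => if h : k < N + 1 then x ⟨k, h⟩ else 0
  have e1 : ∀ i : Fin N, x i.castSucc = a i := by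
    intro i
    have : (i : ℕ) < N + 1 := by omega
    simp only [a, dif_pos this]; rfl
  have e2 : ∀ i : Fin N, x i.succ = a (i + 1) := by
    intro i
    have : (i : ℕ) + 1 < N + 1 := by omega
    simp only [a, dif_pos this]; rfl
  have e3 : x 0 = a 0 := by
    simp [a]
  have e4 : x (Fin.last N) = a N := by
    simp [a, Fin.last]
  simp only [e1, e2, e3, e4] at hg ⊢
  rw [Fin.sum_univ_eq_sum_range (fun k => ∫ s in (a k)..(a (k + 1)), g s) N]
  exact (intervalIntegral.sum_integral_adjacent_intervals
    (fun k hk => hg ⟨k, hk⟩)).symm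

/-- Let `σ ∈ M` be piecewise constant with values `c_i` on `τ_i` and let
`σ̃` be the `L`-periodic continuous function, linear on each `τ_i`, with `σ̃(x_i) = c_i`
for all `i` (indices mod `N`).  Then there exist constants `c, C > 0` depending only on the
quasi-uniformity constants `C₁, C₂` such that
`c ‖σ‖²_{L²(0,L)} ≤ ‖σ̃‖²_{L²(0,L)} ≤ C ‖σ‖²_{L²(0,L)}`
(with `‖σ‖²_{L²(0,L)} = ∑ i, |c_i|² l_i`). -/
theorem stmt_12 (C₁ C₂ : ℝ) (hC₁ : 0 < C₁) (hC₂ : 0 < C₂) :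
    ∃ c > 0, ∃ C > 0, ∀ (L : ℝ), 0 < L → ∀ (N : ℕ) [NeZero N], 2 ≤ N →
      ∀ (x : Fin (N + 1) → ℝ), StrictMono x → x 0 = 0 → x (Fin.last N) = L →
      ∀ h : ℝ, IsGreatest (Set.range fun i : Fin N => x i.succ - x i.castSucc) h →
      (∀ i : Fin N, C₁ * h ≤ x i.succ - x i.castSucc ∧ x i.succ - x i.castSucc ≤ C₂ * h) →
      ∀ (cv : Fin N → ℂ) (σt : ℝ → ℂ), (∀ s, σt (s + L) = σt s) →
      (∀ (i : Fin N), ∀ s ∈ Set.Icc (x i.castSucc) (x i.succ),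
        σt s = cv i
          + (((s - x i.castSucc) / (x i.succ - x i.castSucc) : ℝ) : ℂ) * (cv (i + 1) - cv i)) →
      c * (∑ i : Fin N, ‖cv i‖ ^ 2 * (x i.succ - x i.castSucc))
          ≤ (∫ s in (0:ℝ)..L, ‖σt s‖ ^ 2) ∧
        (∫ s in (0:ℝ)..L, ‖σt s‖ ^ 2)
          ≤ C * ∑ i : Fin N, ‖cv i‖ ^ 2 * (x i.succ - x i.castSucc) := by
  refine ⟨1 / 6, by norm_num, 1 / 2 + 1 / 2 * (C₂ / C₁), by positivity, ?_⟩
  intro L hL N _ hN x hx hx0 hxL h hh hq cv σt _ hσ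
  have hlt : ∀ i : Fin N, x i.castSucc < x i.succ := fun i => hx i.castSucc_lt_succ
  have hsum := aux_sum N x (fun s => ‖σt s‖ ^ 2)
    (fun i => (aux_elem _ _ (hlt i) (cv i) (cv (i + 1)) σt (hσ i)).1)
  rw [hx0, hxL] at hsum
  rw [hsum]
  have hb := fun i : Fin N => aux_bd _ _ (hlt i) (cv i) (cv (i + 1)) σt (hσ i)
  constructor
  · rw [Finset.mul_sum]
    exact Finset.sum_le_sum fun i _ => (hb i).1
  · have hr : ∀ i j : Fin N, x i.succ - x i.castSucc ≤ C₂ / C₁ * (x j.succ - x j.castSucc) := by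
      intro i j
      refine (hq i).2.trans ?_
      rw [div_mul_eq_mul_div, le_div_iff₀ hC₁]
      nlinarith [mul_le_mul_of_nonneg_left (hq j).1 hC₂.le]
    have hshift : ∑ i : Fin N, ‖cv (i + 1)‖ ^ 2 * (x (i + 1).succ - x (i + 1).castSucc)
        = ∑ i : Fin N, ‖cv i‖ ^ 2 * (x i.succ - x i.castSucc) :=
      Equiv.sum_comp (Equiv.addRight (1 : Fin N))
        (fun i => ‖cv i‖ ^ 2 * (x i.succ - x i.castSucc))
    calc _ ≤ ∑ i : Fin N, (1 / 2 * (‖cv i‖ ^ 2 * (x i.succ - x i.castSucc))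
          + 1 / 2 * (C₂ / C₁) * (‖cv (i + 1)‖ ^ 2 * (x (i + 1).succ - x (i + 1).castSucc))) := by
          refine Finset.sum_le_sum fun i _ => (hb i).2.trans ?_
          have := mul_le_mul_of_nonneg_left (hr i (i + 1)) (sq_nonneg ‖cv (i + 1)‖)
          linarith
      _ = _ := by
          rw [Finset.sum_add_distrib, ← Finset.mul_sum, ← Finset.mul_sum, hshift]
          ring
end

section
/- Let X be a complex normed space and let T_k, T̃_k (k = 1, …, J) be bounded linear operators on X. Let α > 0, h₁ > 0, and set h_k = h₁ 2^{1−k}. Assume that ‖I − T̃_k‖ ≤ 1 for every k and that ‖T_k − T̃_k‖ ≤ C₁ h_k^{α} for every k, for some constant C₁ > 0. Then there is a constant C₂ > 0 depending only on C₁, α and h₁ (and in particular independent of J) such that ‖(I − T_1)(I − T_2)⋯(I − T_J)‖ ≤ ‖(I − T̃_1)(I − T̃_2)⋯(I − T̃_J)‖ + C₂ h₁^{α}. -/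
theorem aux_prod {X : Type*} [NormedAddCommGroup X] [NormedSpace ℂ X] (J : ℕ)
    (A B : ℕ → X →L[ℂ] X) (e : ℕ → ℝ)
    (hB : ∀ k, k < J → ‖B k‖ ≤ 1) (hAB : ∀ k, k < J → ‖A k - B k‖ ≤ e k) :
    ‖((List.range J).map B).prod‖ ≤ 1 ∧
    ‖((List.range J).map A).prod - ((List.range J).map B).prod‖
      ≤ Real.exp (∑ k ∈ Finset.range J, e k) - 1 := by
  induction J with
  | zero =>
    refine ⟨?_, by simp⟩
    simp only [List.range_zero, List.map_nil, List.prod_nil]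
    exact ContinuousLinearMap.norm_id_le
  | succ J ih =>
    obtain ⟨h1, h2⟩ := ih (fun k hk => hB k (by omega)) (fun k hk => hAB k (by omega))
    have hb := hB J (by omega)
    have ha := hAB J (by omega)
    rw [List.range_succ, Finset.sum_range_succ]
    simp only [List.map_append, List.prod_append, List.map_cons, List.map_nil, List.prod_cons,
      List.prod_nil, mul_one]
    set P := ((List.range J).map A).prod
    set Q := ((List.range J).map B).prod
    set S := ∑ k ∈ Finset.range J, e k
    refine ⟨(norm_mul_le _ _).trans (mul_le_one₀ h1 (norm_nonneg _) hb), ?_⟩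
    have hP : ‖P‖ ≤ Real.exp S := by
      have := norm_add_le (P - Q) Q
      rw [sub_add_cancel] at this
      linarith
    have e1 : P * A J - Q * B J = (P - Q) * B J + P * (A J - B J) := by
      noncomm_ring
    rw [e1, Real.exp_add]
    have n1 : ‖(P - Q) * B J‖ ≤ (Real.exp S - 1) :=
      (norm_mul_le _ _).trans ((mul_le_of_le_one_right (norm_nonneg _) hb).trans h2)
    have n2 : ‖P * (A J - B J)‖ ≤ Real.exp S * e J :=
      (norm_mul_le _ _).trans (mul_le_mul hP ha (norm_nonneg _) (Real.exp_pos _).le)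
    have n3 : Real.exp S * (e J + 1) ≤ Real.exp S * Real.exp (e J) :=
      mul_le_mul_of_nonneg_left (Real.add_one_le_exp _) (Real.exp_pos _).le
    have := norm_add_le ((P - Q) * B J) (P * (A J - B J))
    linarith

/-- Let `α > 0`, `h₁ > 0`, `C₁ > 0`.  Then there is a constant `C₂ > 0`
depending only on `C₁`, `α` and `h₁` (and in particular independent of `J`) such that the
following holds: for every complex normed space `X` and bounded linear operators
`T_k, T̃_k` (`k = 1, …, J`) on `X` with `‖I − T̃_k‖ ≤ 1` for every `k` and
`‖T_k − T̃_k‖ ≤ C₁ h_k^α` for every `k`, where `h_k = h₁ 2^{1−k}`, one has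
`‖(I − T_1)(I − T_2)⋯(I − T_J)‖ ≤ ‖(I − T̃_1)(I − T̃_2)⋯(I − T̃_J)‖ + C₂ h₁^α`.
(Products of operators in `X →L[ℂ] X` are compositions, in the indicated order.) -/
theorem stmt_15 (C₁ α h₁ : ℝ) (hC₁ : 0 < C₁) (hα : 0 < α) (hh₁ : 0 < h₁) :
    ∃ C₂ > 0, ∀ (X : Type*) [inst₁ : NormedAddCommGroup X] [inst₂ : NormedSpace ℂ X]
      (J : ℕ), 1 ≤ J → ∀ T T' : ℕ → X →L[ℂ] X,
      (∀ k, 1 ≤ k → k ≤ J → ‖(1 : X →L[ℂ] X) - T' k‖ ≤ 1) →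
      (∀ k, 1 ≤ k → k ≤ J → ‖T k - T' k‖ ≤ C₁ * (h₁ * 2 ^ (1 - (k : ℤ))) ^ α) →
      ‖((List.range J).map fun k => 1 - T (k + 1)).prod‖
        ≤ ‖((List.range J).map fun k => 1 - T' (k + 1)).prod‖ + C₂ * h₁ ^ α := by
  have hr0 : (0 : ℝ) ≤ (2 : ℝ) ^ (-α) := by positivity
  have hr1 : (2 : ℝ) ^ (-α) < 1 := Real.rpow_lt_one_of_one_lt_of_neg (by norm_num) (by linarith)
  set r : ℝ := (2 : ℝ) ^ (-α) with hr
  have hp : 0 < h₁ ^ α := Real.rpow_pos_of_pos hh₁ α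
  have hr1' : 0 < 1 - r := by linarith
  have ha : 0 < C₁ * h₁ ^ α * (1 - r)⁻¹ := by positivity
  refine ⟨(Real.exp (C₁ * h₁ ^ α * (1 - r)⁻¹) - 1) / h₁ ^ α, ?_, ?_⟩
  · have := Real.one_lt_exp_iff.2 ha
    exact div_pos (by linarith) hp
  intro X _ _ J _ T T' hT' hT
  rw [div_mul_cancel₀ _ hp.ne']
  obtain ⟨-, h⟩ := aux_prod J (fun k => 1 - T (k + 1)) (fun k => 1 - T' (k + 1))
    (fun k => C₁ * h₁ ^ α * r ^ k) (fun k hk => hT' (k + 1) (by omega) (by omega)) (by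
      intro k hk
      have := hT (k + 1) (by omega) (by omega)
      have e1 : (1 - T (k + 1)) - (1 - T' (k + 1)) = -(T (k + 1) - T' (k + 1)) := by abel
      simp only [e1, norm_neg]
      refine this.trans (le_of_eq ?_)
      have e2 : (1 - ((k + 1 : ℕ) : ℤ)) = -(k : ℤ) := by push_cast; ring
      rw [e2, Real.mul_rpow hh₁.le (by positivity), mul_assoc, hr]
      congr 2
      rw [← Real.rpow_intCast, ← Real.rpow_natCast, ← Real.rpow_mul (by norm_num),
        ← Real.rpow_mul (by norm_num)]
      congr 1
      push_cast
      ring)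
  have hs : ∑ k ∈ Finset.range J, C₁ * h₁ ^ α * r ^ k ≤ C₁ * h₁ ^ α * (1 - r)⁻¹ := by
    rw [← Finset.mul_sum]
    refine mul_le_mul_of_nonneg_left ?_ (by positivity)
    rw [← tsum_geometric_of_lt_one hr0 hr1]
    exact (summable_geometric_of_lt_one hr0 hr1).sum_le_tsum _ (fun i _ => by positivity)
  have h3 := Real.exp_le_exp.2 hs
  have h4 := norm_le_norm_add_norm_sub' ((List.range J).map fun k => 1 - T (k + 1)).prod
    ((List.range J).map fun k => 1 - T' (k + 1)).prod
  linarith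
end
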